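/- arXiv:1803.01306 — 4 statements merged into one kernel-verified Lean document; each statement's English description precedes it below -/
import Mathlib

section
/- Fix θ ∈ (π/4, π/2) and set A₁ = √(sin θ − cos θ), A₂ = √(cos θ) + √(sin θ), A₃ = arctan(√(tan θ − 1)). Define X^θ : ℝ² → ℝ³ by X^θ(u,v) = ( [(A₁² + A₂²)A₁u + (A₁² − A₂²)·sin(A₁u + A₃)·cosh(A₁v) + (A₂² − A₁²)·sin A₃] / (2A₁³A₂), [(A₂² − A₁²)A₁v − (A₁² + A₂²)·cos(A₁u + A₃)·sinh(A₁v)] / (2A₁³A₂), [cos(A₁u + A₃)·cosh(A₁v) − cos A₃] / A₁² ). Then: (i) each component of X^θ is harmonic (X_uu + X_vv = 0 on ℝ²); (ii) X^θ is conformal with respect to the Minkowski inner product: ⟨X_u, X_u⟩ = ⟨X_v, X_v⟩ and ⟨X_u, X_v⟩ = 0 everywhere; (iii) X^θ has planar curvature lines: det(X_u, X_uu, X_uuu) = 0 and det(X_v, X_vv, X_vvv) = 0 identically on ℝ². (These are the maximal Bonnet-type surfaces with spacelike axial direction.) -/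
open Real Filter

/-- Partial derivative in the first variable. -/
noncomputable def pu {E : Type*} [NormedAddCommGroup E] [NormedSpace ℝ E]
    (f : ℝ → ℝ → E) (u v : ℝ) : E := deriv (fun x => f x v) u

/-- Partial derivative in the second variable. -/
noncomputable def pv {E : Type*} [NormedAddCommGroup E] [NormedSpace ℝ E]
    (f : ℝ → ℝ → E) (u v : ℝ) : E := deriv (fun y => f u y) v

/-- Minkowski inner product on ℝ³ = ℝ^{2,1}, with coordinates (x₁, x₂, x₀). -/
def mink (x y : ℝ × ℝ × ℝ) : ℝ := x.1 * y.1 + x.2.1 * y.2.1 - x.2.2 * y.2.2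

/-- Determinant of the 3×3 matrix with rows a, b, c. -/
def det3 (a b c : ℝ × ℝ × ℝ) : ℝ :=
  a.1 * (b.2.1 * c.2.2 - b.2.2 * c.2.1)
    - a.2.1 * (b.1 * c.2.2 - b.2.2 * c.1)
    + a.2.2 * (b.1 * c.2.1 - b.2.1 * c.1)

/-! Write `z = u + iv`, `S = sin (A₁z + A₃)` and `C = cos (A₁z + A₃)`. Up to a constant, `X` is the
real part of `F = (p A₁z + q S, i (q A₁z + p S), s C)` for real `p`, `q`, `s`, and is therefore
harmonic. It is conformal because `F'` is null for the complexified Minkowski form: its square is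
`A₁² ((p² - q²)(1 - C²) - s² S²)`, and `p² - q² = s²`. Since `F''' = A₁² (A₁ (p, iq, 0) - F')`, the
determinants along both families of curvature lines are multiples of the imaginary part of
`S² + C²`, which is `1`. -/

section HolomorphicSurface

variable {E G : Type*} [NormedAddCommGroup E] [NormedSpace ℝ E]
  [NormedAddCommGroup G] [NormedSpace ℝ G]

/-- The surface in `G` traced by a complex curve `f` under a real-linear map `L`, in the parameters
`z = u + iv`. With `L` a componentwise real part this is the real part of `f`. -/
def holoSurface (L : E →L[ℝ] G) (f : ℂ → E) (u v : ℝ) : G :=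
  L (f (u + v * Complex.I))

variable [NormedSpace ℂ E] [IsScalarTower ℝ ℂ E] {f f' f'' : ℂ → E} (L : E →L[ℝ] G)

theorem pu_holoSurface (hf : ∀ z, HasDerivAt f (f' z) z) :
    pu (holoSurface L f) = holoSurface L f' := by
  funext u v
  have hline : HasDerivAt (fun x : ℝ => (x + v * Complex.I : ℂ)) 1 u :=
    (Complex.ofRealCLM.hasDerivAt (x := u)).add_const _
  have hcomp := (hf _).scomp u hline
  rw [one_smul] at hcomp
  exact (L.hasFDerivAt.comp_hasDerivAt u hcomp).deriv

theorem pv_holoSurface (hf : ∀ z, HasDerivAt f (f' z) z) :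
    pv (holoSurface L f) = holoSurface L (Complex.I • f') := by
  funext u v
  have hline : HasDerivAt (fun y : ℝ => (u + y * Complex.I : ℂ)) Complex.I v := by
    simpa using ((Complex.ofRealCLM.hasDerivAt (x := v)).mul_const Complex.I).const_add (u : ℂ)
  exact (L.hasFDerivAt.comp_hasDerivAt v ((hf _).scomp v hline)).deriv

theorem pv_pv_holoSurface (hf : ∀ z, HasDerivAt f (f' z) z)
    (hf' : ∀ z, HasDerivAt f' (f'' z) z) :
    pv (pv (holoSurface L f)) = holoSurface L (-f'') := by
  rw [pv_holoSurface L hf, pv_holoSurface L fun z => (hf' z).const_smul Complex.I]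
  congr 1
  funext z
  simp [smul_smul]

theorem pu_pu_add_pv_pv_holoSurface (hf : ∀ z, HasDerivAt f (f' z) z)
    (hf' : ∀ z, HasDerivAt f' (f'' z) z) (u v : ℝ) :
    pu (pu (holoSurface L f)) u v + pv (pv (holoSurface L f)) u v = 0 := by
  rw [pu_holoSurface L hf, pu_holoSurface L hf', pv_pv_holoSurface L hf hf']
  simp [holoSurface]

end HolomorphicSurface

section Null

/-- Componentwise real part `ℂ³ → ℝ³`. -/
noncomputable def reCLM₃ : ℂ × ℂ × ℂ →L[ℝ] ℝ × ℝ × ℝ :=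
  Complex.reCLM.prodMap (Complex.reCLM.prodMap Complex.reCLM)

@[simp]
theorem reCLM₃_apply (w : ℂ × ℂ × ℂ) : reCLM₃ w = (w.1.re, w.2.1.re, w.2.2.re) := rfl

/-- Null vectors of `ℂ³` for the complex-bilinear extension of the Minkowski form `mink`. -/
def IsNull (w : ℂ × ℂ × ℂ) : Prop :=
  w.1 ^ 2 + w.2.1 ^ 2 - w.2.2 ^ 2 = 0

theorem isNull_iff_mink_re {w : ℂ × ℂ × ℂ} :
    IsNull w ↔ mink (reCLM₃ w) (reCLM₃ w) =
        mink (reCLM₃ (Complex.I • w)) (reCLM₃ (Complex.I • w)) ∧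
      mink (reCLM₃ w) (reCLM₃ (Complex.I • w)) = 0 := by
  simp only [IsNull, Complex.ext_iff, mink, reCLM₃_apply, pow_two, Prod.smul_fst, Prod.smul_snd,
    smul_eq_mul, Complex.add_re, Complex.add_im, Complex.sub_re, Complex.sub_im, Complex.mul_re,
    Complex.mul_im, Complex.I_re, Complex.I_im, Complex.zero_re, Complex.zero_im]
  constructor <;> rintro ⟨hre, him⟩ <;> constructor <;> linarith

theorem conformal_holoSurface {f f' : ℂ → ℂ × ℂ × ℂ} (hf : ∀ z, HasDerivAt f (f' z) z)
    (hnull : ∀ z, IsNull (f' z)) (u v : ℝ) :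
    mink (pu (holoSurface reCLM₃ f) u v) (pu (holoSurface reCLM₃ f) u v) =
        mink (pv (holoSurface reCLM₃ f) u v) (pv (holoSurface reCLM₃ f) u v) ∧
      mink (pu (holoSurface reCLM₃ f) u v) (pv (holoSurface reCLM₃ f) u v) = 0 := by
  rw [pu_holoSurface _ hf, pv_holoSurface _ hf]
  exact isNull_iff_mink_re.1 (hnull _)

end Null

theorem det3_smul_sub (r : ℝ) (x y w : ℝ × ℝ × ℝ) :
    det3 x y (r • (w - x)) = r * det3 x y w := by
  simp only [det3, Prod.smul_fst, Prod.smul_snd, Prod.fst_sub, Prod.snd_sub, smul_eq_mul]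
  ring

section Trigonometry

theorem hasDerivAt_sin_mul_add (a c z : ℂ) :
    HasDerivAt (fun z => Complex.sin (a * z + c)) (a * Complex.cos (a * z + c)) z := by
  simpa [mul_comm] using (((hasDerivAt_id z).const_mul a).add_const c).csin

theorem hasDerivAt_cos_mul_add (a c z : ℂ) :
    HasDerivAt (fun z => Complex.cos (a * z + c)) (-(a * Complex.sin (a * z + c))) z := by
  simpa [mul_comm] using (((hasDerivAt_id z).const_mul a).add_const c).ccos

theorem re_mul_im_sin_add_re_mul_im_cos (w : ℂ) :
    (Complex.sin w).re * (Complex.sin w).im + (Complex.cos w).re * (Complex.cos w).im = 0 := by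
  have him := congrArg Complex.im (Complex.sin_sq_add_cos_sq w)
  simp only [pow_two, Complex.add_im, Complex.mul_im, Complex.one_im] at him
  linarith

theorem cos_lt_sin_of_mem_Ioo {θ : ℝ} (hθ : θ ∈ Set.Ioo (π / 4) (5 * π / 4)) :
    cos θ < sin θ := by
  have hpos : 0 < sin (θ - π / 4) :=
    sin_pos_of_mem_Ioo ⟨by linarith [hθ.1], by linarith [hθ.2]⟩
  rw [sin_sub, cos_pi_div_four, sin_pi_div_four, ← sub_mul] at hpos
  exact sub_pos.1 (pos_of_mul_pos_left hpos (by positivity))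

theorem sqrt_sin_sub_cos_pos {θ : ℝ} (hθ : θ ∈ Set.Ioo (π / 4) (5 * π / 4)) :
    0 < √(sin θ - cos θ) :=
  sqrt_pos.2 (sub_pos.2 (cos_lt_sin_of_mem_Ioo hθ))

theorem sqrt_cos_add_sqrt_sin_pos {θ : ℝ} (hθ : θ ∈ Set.Ioo (-(π / 2)) (π / 2)) :
    0 < √(cos θ) + √(sin θ) :=
  add_pos_of_pos_of_nonneg (sqrt_pos.2 (cos_pos_of_mem_Ioo hθ)) (sqrt_nonneg _)

end Trigonometry

section BonnetCurve

/-- The holomorphic curve with value `0` at `0` whose real part is a maximal Bonnet-type surface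
when `p ^ 2 - q ^ 2 = s ^ 2`. The parameter `c` is the phase, called `A₃` in the theorem. -/
noncomputable def bonnetCurve (a c p q s : ℝ) (z : ℂ) : ℂ × ℂ × ℂ :=
  (p * (a * z) + q * (Complex.sin (a * z + c) - Complex.sin c),
    Complex.I * (q * (a * z) + p * (Complex.sin (a * z + c) - Complex.sin c)),
    s * (Complex.cos (a * z + c) - Complex.cos c))

/-- The first derivative of `bonnetCurve`. -/
noncomputable def bonnetCurveD1 (a c p q s : ℝ) (z : ℂ) : ℂ × ℂ × ℂ :=
  (a * (p + q * Complex.cos (a * z + c)), Complex.I * (a * (q + p * Complex.cos (a * z + c))),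
    -(a * s * Complex.sin (a * z + c)))

/-- The second derivative of `bonnetCurve`. -/
noncomputable def bonnetCurveD2 (a c p q s : ℝ) (z : ℂ) : ℂ × ℂ × ℂ :=
  (-(a ^ 2 * q * Complex.sin (a * z + c)), -(Complex.I * (a ^ 2 * p * Complex.sin (a * z + c))),
    -(a ^ 2 * s * Complex.cos (a * z + c)))

/-- The constant vector `e` of the equation `F''' = a² (e - F')` satisfied by
`F = bonnetCurve a c p q s`. -/
noncomputable def bonnetAxis (a p q : ℝ) : ℂ × ℂ × ℂ :=
  (a * p, Complex.I * (a * q), 0)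

/-- The third derivative of `bonnetCurve`, in a form that shows its dependence on the first. -/
noncomputable def bonnetCurveD3 (a c p q s : ℝ) (z : ℂ) : ℂ × ℂ × ℂ :=
  a ^ 2 • (bonnetAxis a p q - bonnetCurveD1 a c p q s z)

variable (a c p q s : ℝ)

theorem hasDerivAt_bonnetCurve (z : ℂ) :
    HasDerivAt (bonnetCurve a c p q s) (bonnetCurveD1 a c p q s z) z := by
  have hlin : HasDerivAt (fun z : ℂ => (a : ℂ) * z) a z := by
    simpa using (hasDerivAt_id z).const_mul (a : ℂ)
  have hsin := (hasDerivAt_sin_mul_add a c z).sub_const (Complex.sin c)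
  have hcos := (hasDerivAt_cos_mul_add a c z).sub_const (Complex.cos c)
  refine (((hlin.const_mul (p : ℂ)).add (hsin.const_mul (q : ℂ))).prodMk
    ((((hlin.const_mul (q : ℂ)).add (hsin.const_mul (p : ℂ))).const_mul Complex.I).prodMk
      (hcos.const_mul (s : ℂ)))).congr_deriv ?_
  rw [bonnetCurveD1]
  ext1
  · ring
  · ext1 <;> ring

theorem hasDerivAt_bonnetCurveD1 (z : ℂ) :
    HasDerivAt (bonnetCurveD1 a c p q s) (bonnetCurveD2 a c p q s z) z := by
  have hsin := hasDerivAt_sin_mul_add a c z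
  have hcos := hasDerivAt_cos_mul_add a c z
  refine ((((hcos.const_mul (q : ℂ)).const_add (p : ℂ)).const_mul (a : ℂ)).prodMk
    (((((hcos.const_mul (p : ℂ)).const_add (q : ℂ)).const_mul (a : ℂ)).const_mul
      Complex.I).prodMk (hsin.const_mul (a * s : ℂ)).neg)).congr_deriv ?_
  rw [bonnetCurveD2]
  ext1
  · ring
  · ext1 <;> ring

theorem hasDerivAt_bonnetCurveD2 (z : ℂ) :
    HasDerivAt (bonnetCurveD2 a c p q s) (bonnetCurveD3 a c p q s z) z := by
  have hsin := hasDerivAt_sin_mul_add a c z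
  have hcos := hasDerivAt_cos_mul_add a c z
  refine ((hsin.const_mul (a ^ 2 * q : ℂ)).neg.prodMk
    (((hsin.const_mul (a ^ 2 * p : ℂ)).const_mul Complex.I).neg.prodMk
      (hcos.const_mul (a ^ 2 * s : ℂ)).neg)).congr_deriv ?_
  simp only [bonnetCurveD3, bonnetAxis, bonnetCurveD1, Prod.mk_sub_mk, Prod.smul_mk,
    Complex.real_smul, Complex.ofReal_pow]
  ext1
  · ring
  · ext1 <;> ring

variable {p q s} in
theorem isNull_bonnetCurveD1 (h : p ^ 2 - q ^ 2 = s ^ 2) (z : ℂ) :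
    IsNull (bonnetCurveD1 a c p q s z) := by
  have hpqs : (p : ℂ) ^ 2 - q ^ 2 = s ^ 2 := mod_cast h
  have hsc := Complex.sin_sq_add_cos_sq (a * z + c)
  simp only [IsNull, bonnetCurveD1]
  linear_combination
    (a : ℂ) ^ 2 * (1 - Complex.cos (a * z + c) ^ 2) * hpqs - (a : ℂ) ^ 2 * s ^ 2 * hsc +
      a ^ 2 * (q + p * Complex.cos (a * z + c)) ^ 2 * Complex.I_sq

theorem reCLM₃_bonnetCurveD1 (z : ℂ) :
    reCLM₃ (bonnetCurveD1 a c p q s z) =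
      (a * (p + q * (Complex.cos (a * z + c)).re), -(a * (p * (Complex.cos (a * z + c)).im)),
        -(a * s * (Complex.sin (a * z + c)).re)) := by
  simp [bonnetCurveD1]

theorem reCLM₃_I_smul_bonnetCurveD1 (z : ℂ) :
    reCLM₃ (Complex.I • bonnetCurveD1 a c p q s z) =
      (-(a * (q * (Complex.cos (a * z + c)).im)), -(a * (q + p * (Complex.cos (a * z + c)).re)),
        a * s * (Complex.sin (a * z + c)).im) := by
  simp [bonnetCurveD1]

theorem reCLM₃_bonnetCurveD2 (z : ℂ) :
    reCLM₃ (bonnetCurveD2 a c p q s z) =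
      (-(a ^ 2 * q * (Complex.sin (a * z + c)).re), a ^ 2 * p * (Complex.sin (a * z + c)).im,
        -(a ^ 2 * s * (Complex.cos (a * z + c)).re)) := by
  simp [bonnetCurveD2, ← Complex.ofReal_pow, mul_assoc]

theorem reCLM₃_bonnetAxis : reCLM₃ (bonnetAxis a p q) = (a * p, 0, 0) := by
  simp [bonnetAxis]

theorem reCLM₃_I_smul_bonnetAxis : reCLM₃ (Complex.I • bonnetAxis a p q) = (0, -(a * q), 0) := by
  simp [bonnetAxis]

theorem det3_pu_holoSurface_bonnetCurve (u v : ℝ) :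
    letI X := holoSurface reCLM₃ (bonnetCurve a c p q s)
    det3 (pu X u v) (pu (pu X) u v) (pu (pu (pu X)) u v) = 0 := by
  rw [pu_holoSurface _ (hasDerivAt_bonnetCurve a c p q s),
    pu_holoSurface _ (hasDerivAt_bonnetCurveD1 a c p q s),
    pu_holoSurface _ (hasDerivAt_bonnetCurveD2 a c p q s)]
  have him := re_mul_im_sin_add_re_mul_im_cos (a * (u + v * Complex.I) + c)
  simp only [holoSurface, bonnetCurveD3, map_smul, map_sub, det3_smul_sub]
  simp only [reCLM₃_bonnetCurveD1, reCLM₃_bonnetCurveD2, reCLM₃_bonnetAxis, det3]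
  linear_combination a ^ 6 * p ^ 2 * s * him

theorem det3_pv_holoSurface_bonnetCurve (u v : ℝ) :
    letI X := holoSurface reCLM₃ (bonnetCurve a c p q s)
    det3 (pv X u v) (pv (pv X) u v) (pv (pv (pv X)) u v) = 0 := by
  rw [pv_pv_holoSurface _ (hasDerivAt_bonnetCurve a c p q s) (hasDerivAt_bonnetCurveD1 a c p q s),
    pv_holoSurface _ (hasDerivAt_bonnetCurve a c p q s),
    pv_holoSurface _ fun z => (hasDerivAt_bonnetCurveD2 a c p q s z).neg]
  have him := re_mul_im_sin_add_re_mul_im_cos (a * (u + v * Complex.I) + c)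
  have hD3 (z : ℂ) : Complex.I • -bonnetCurveD3 a c p q s z =
      (-a ^ 2) • (Complex.I • bonnetAxis a p q - Complex.I • bonnetCurveD1 a c p q s z) := by
    rw [bonnetCurveD3, neg_smul, smul_neg, smul_comm, smul_sub]
  simp only [holoSurface, Pi.smul_apply, Pi.neg_apply, hD3, map_smul, map_sub, map_neg,
    det3_smul_sub]
  simp only [reCLM₃_I_smul_bonnetCurveD1, reCLM₃_bonnetCurveD2, reCLM₃_I_smul_bonnetAxis,
    det3, Prod.neg_mk]
  linear_combination a ^ 6 * q ^ 2 * s * him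

theorem holoSurface_bonnetCurve (u v : ℝ) :
    holoSurface reCLM₃ (bonnetCurve a c p q s) u v =
      (p * (a * u) + q * (sin (a * u + c) * cosh (a * v) - sin c),
        -(q * (a * v) + p * (cos (a * u + c) * sinh (a * v))),
        s * (cos (a * u + c) * cosh (a * v) - cos c)) := by
  have hz : (a * (u + v * Complex.I) + c : ℂ) = ↑(a * u + c) + ↑(a * v) * Complex.I := by
    push_cast; ring
  simp only [holoSurface, bonnetCurve, reCLM₃_apply, hz, Complex.sin_add_mul_I,
    Complex.cos_add_mul_I]
  simp [-Complex.ofReal_add, -Complex.ofReal_mul, ← Complex.ofReal_sin, ← Complex.ofReal_cos,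
    ← Complex.ofReal_sinh, ← Complex.ofReal_cosh]

end BonnetCurve

theorem bonnet_spacelike_is_maximal_with_planar_curvature_lines_general
    {A1 A2 : ℝ} (hA1 : A1 ≠ 0) (hA2 : A2 ≠ 0) (A3 : ℝ) (X : ℝ → ℝ → ℝ × ℝ × ℝ)
    (hX : ∀ u v : ℝ, X u v =
      (((A1 ^ 2 + A2 ^ 2) * A1 * u
          + (A1 ^ 2 - A2 ^ 2) * sin (A1 * u + A3) * cosh (A1 * v)
          + (A2 ^ 2 - A1 ^ 2) * sin A3) / (2 * A1 ^ 3 * A2),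
       ((A2 ^ 2 - A1 ^ 2) * A1 * v
          - (A1 ^ 2 + A2 ^ 2) * cos (A1 * u + A3) * sinh (A1 * v)) / (2 * A1 ^ 3 * A2),
       (cos (A1 * u + A3) * cosh (A1 * v) - cos A3) / A1 ^ 2)) :
    (∀ u v : ℝ, pu (pu X) u v + pv (pv X) u v = 0) ∧
    (∀ u v : ℝ,
      mink (pu X u v) (pu X u v) = mink (pv X u v) (pv X u v) ∧
      mink (pu X u v) (pv X u v) = 0) ∧
    (∀ u v : ℝ,
      det3 (pu X u v) (pu (pu X) u v) (pu (pu (pu X)) u v) = 0 ∧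
      det3 (pv X u v) (pv (pv X) u v) (pv (pv (pv X)) u v) = 0) := by
  obtain ⟨p, hp⟩ : ∃ p, p = (A1 ^ 2 + A2 ^ 2) / (2 * A1 ^ 3 * A2) := ⟨_, rfl⟩
  obtain ⟨q, hq⟩ : ∃ q, q = (A1 ^ 2 - A2 ^ 2) / (2 * A1 ^ 3 * A2) := ⟨_, rfl⟩
  obtain ⟨s, hs⟩ : ∃ s, s = 1 / A1 ^ 2 := ⟨_, rfl⟩
  have hpqs : p ^ 2 - q ^ 2 = s ^ 2 := by
    rw [hp, hq, hs]
    field_simp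
    ring
  obtain rfl : X = holoSurface reCLM₃ (bonnetCurve A1 A3 p q s) := by
    funext u v
    rw [hX, holoSurface_bonnetCurve, hp, hq, hs]
    ext1
    · ring
    · ext1 <;> ring
  have hF := hasDerivAt_bonnetCurve A1 A3 p q s
  exact ⟨pu_pu_add_pv_pv_holoSurface _ hF (hasDerivAt_bonnetCurveD1 A1 A3 p q s),
    conformal_holoSurface hF (isNull_bonnetCurveD1 A1 A3 hpqs),
    fun u v => ⟨det3_pu_holoSurface_bonnetCurve A1 A3 p q s u v,
      det3_pv_holoSurface_bonnetCurve A1 A3 p q s u v⟩⟩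

/-- For θ ∈ (π/4, π/2), the explicit map X^θ (the maximal Bonnet-type
surface with spacelike axial direction) is harmonic, conformal with respect to the
Minkowski inner product, and has planar u- and v-curvature lines. -/
theorem bonnet_spacelike_is_maximal_with_planar_curvature_lines
    (θ : ℝ) (hθ : θ ∈ Set.Ioo (π / 4) (π / 2))
    (A1 A2 A3 : ℝ)
    (hA1 : A1 = Real.sqrt (Real.sin θ - Real.cos θ))
    (hA2 : A2 = Real.sqrt (Real.cos θ) + Real.sqrt (Real.sin θ))
    (hA3 : A3 = Real.arctan (Real.sqrt (Real.tan θ - 1)))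
    (X : ℝ → ℝ → ℝ × ℝ × ℝ)
    (hX : ∀ u v : ℝ, X u v =
      (((A1 ^ 2 + A2 ^ 2) * A1 * u
          + (A1 ^ 2 - A2 ^ 2) * Real.sin (A1 * u + A3) * Real.cosh (A1 * v)
          + (A2 ^ 2 - A1 ^ 2) * Real.sin A3) / (2 * A1 ^ 3 * A2),
       ((A2 ^ 2 - A1 ^ 2) * A1 * v
          - (A1 ^ 2 + A2 ^ 2) * Real.cos (A1 * u + A3) * Real.sinh (A1 * v))
            / (2 * A1 ^ 3 * A2),
       (Real.cos (A1 * u + A3) * Real.cosh (A1 * v) - Real.cos A3) / A1 ^ 2)) :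
    (∀ u v : ℝ, pu (pu X) u v + pv (pv X) u v = 0) ∧
    (∀ u v : ℝ,
      mink (pu X u v) (pu X u v) = mink (pv X u v) (pv X u v) ∧
      mink (pu X u v) (pv X u v) = 0) ∧
    (∀ u v : ℝ,
      det3 (pu X u v) (pu (pu X) u v) (pu (pu (pu X)) u v) = 0 ∧
      det3 (pv X u v) (pv (pv X) u v) (pv (pv (pv X)) u v) = 0) := by
  exact bonnet_spacelike_is_maximal_with_planar_curvature_lines_general
    (hA1 ▸ (sqrt_sin_sub_cos_pos ⟨hθ.1, by linarith [hθ.2, pi_pos]⟩).ne')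
    (hA2 ▸ (sqrt_cos_add_sqrt_sin_pos ⟨by linarith [hθ.1, pi_pos], hθ.2⟩).ne') A3 X hX
end

section
/- For θ ∈ (π/4, π/2) let X^θ be the map defined with A₁ = √(sin θ − cos θ), A₂ = √(cos θ) + √(sin θ), A₃ = arctan(√(tan θ − 1)) by X^θ(u,v) = ( [(A₁² + A₂²)A₁u + (A₁² − A₂²)sin(A₁u + A₃)cosh(A₁v) + (A₂² − A₁²)sin A₃]/(2A₁³A₂), [(A₂² − A₁²)A₁v − (A₁² + A₂²)cos(A₁u + A₃)sinh(A₁v)]/(2A₁³A₂), [cos(A₁u + A₃)cosh(A₁v) − cos A₃]/A₁² ); for θ ∈ (−π/2, π/4) let X^θ be the map defined with B₁ = √(cos θ − sin θ), B₂ = 1 + √(1 − tan θ) by X^θ(u,v) = ( e^{−B₁u}[(B₂(B₂(e^{2B₁u} − 1) + 2) − 2)cos(B₁v) − 2e^{B₁u}(B₁B₂u + B₂ − 1)]/(2B₁²B₂(B₂ − 1)), e^{−B₁u}[(B₂e^{2B₁u} − B₂ + 2)sin(B₁v) − 2B₁v e^{B₁u}]/(2B₁²(B₂ − 1)), −[B₁B₂u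 + e^{−B₁u}cos(B₁v) − 1]/(B₁²B₂) ). Then for every fixed (u,v) ∈ ℝ², both one-sided limits as θ → π/4 exist and lim_{θ→(π/4)⁺} X^θ(u,v) = lim_{θ→(π/4)⁻} X^θ(u,v) = (1/√2)·( û − û·v̂² + û³/3 − 4/3, −v̂ + û²·v̂ − v̂³/3, −û² + v̂² + 1 ), where û = 2^{−1/4}u + 1 and v̂ = 2^{−1/4}v. (Thus the family X^θ is continuous in θ at θ = π/4, where it equals the maximal Enneper-type surface.) -/
open Real Filter Topology

/-- The parametrization X^θ for θ ∈ (π/4, π/2) (spacelike-axial Bonnet-type branch). -/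
noncomputable def XA (θ u v : ℝ) : ℝ × ℝ × ℝ :=
  let A1 := Real.sqrt (Real.sin θ - Real.cos θ)
  let A2 := Real.sqrt (Real.cos θ) + Real.sqrt (Real.sin θ)
  let A3 := Real.arctan (Real.sqrt (Real.tan θ - 1))
  (((A1 ^ 2 + A2 ^ 2) * A1 * u
      + (A1 ^ 2 - A2 ^ 2) * Real.sin (A1 * u + A3) * Real.cosh (A1 * v)
      + (A2 ^ 2 - A1 ^ 2) * Real.sin A3) / (2 * A1 ^ 3 * A2),
   ((A2 ^ 2 - A1 ^ 2) * A1 * v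
      - (A1 ^ 2 + A2 ^ 2) * Real.cos (A1 * u + A3) * Real.sinh (A1 * v))
        / (2 * A1 ^ 3 * A2),
   (Real.cos (A1 * u + A3) * Real.cosh (A1 * v) - Real.cos A3) / A1 ^ 2)

/-- The parametrization X^θ for θ ∈ (−π/2, π/4) (the other Bonnet-type branch). -/
noncomputable def XB (θ u v : ℝ) : ℝ × ℝ × ℝ :=
  let B1 := Real.sqrt (Real.cos θ - Real.sin θ)
  let B2 := 1 + Real.sqrt (1 - Real.tan θ)
  (Real.exp (-(B1 * u)) *
      ((B2 * (B2 * (Real.exp (2 * B1 * u) - 1) + 2) - 2) * Real.cos (B1 * v)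
        - 2 * Real.exp (B1 * u) * (B1 * B2 * u + B2 - 1))
      / (2 * B1 ^ 2 * B2 * (B2 - 1)),
   Real.exp (-(B1 * u)) *
      ((B2 * Real.exp (2 * B1 * u) - B2 + 2) * Real.sin (B1 * v)
        - 2 * B1 * v * Real.exp (B1 * u))
      / (2 * B1 ^ 2 * (B2 - 1)),
   -((B1 * B2 * u + Real.exp (-(B1 * u)) * Real.cos (B1 * v) - 1)
      / (B1 ^ 2 * B2)))

/-- The maximal Enneper-type surface, in the coordinates û = 2^{-1/4}u + 1,
v̂ = 2^{-1/4}v. -/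
noncomputable def EnneperMax (u v : ℝ) : ℝ × ℝ × ℝ :=
  let uh := (2 : ℝ) ^ (-(1 : ℝ) / 4) * u + 1
  let vh := (2 : ℝ) ^ (-(1 : ℝ) / 4) * v
  ((1 / Real.sqrt 2) * (uh - uh * vh ^ 2 + uh ^ 3 / 3 - 4 / 3),
   (1 / Real.sqrt 2) * (-vh + uh ^ 2 * vh - vh ^ 3 / 3),
   (1 / Real.sqrt 2) * (-uh ^ 2 + vh ^ 2 + 1))

/-!
Near `θ = π / 4` both branches depend on a parameter that tends to `0` (`A₁`, respectively `B₁`),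
and a second parameter (`A₃`, respectively `B₂ - 1`) vanishes at the same rate: the quotient tends
to `m = 2 ^ (1 / 4)` on both sides. Subtracting the constant and linear Taylor terms of the
trigonometric, hyperbolic and exponential functions cancels everything singular in each coordinate;
what remains is a sum of products of quotients such as `(sin x - x) / a ^ 3` with `x / a`
convergent, whose limits are the leading Taylor coefficients times powers of `lim x / a`. These
assemble to the same cubic polynomials in `u` and `v` for both branches.
-/

open scoped Asymptotics

/-- The Enneper surface
`m² / 2 • (û - û v̂² + û³ / 3 - 4 / 3, -v̂ + û² v̂ - v̂³ / 3, -û² + v̂² + 1)`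
with `û = u / m + 1` and `v̂ = v / m`, multiplied out; `EnneperMax` is the case `m = 2 ^ (1 / 4)`.
Both Bonnet branches degenerate to it, with `m` the limit of `A₃ / A₁` and of `(B₂ - 1) / B₁`. -/
noncomputable def scaledEnneper (m u v : ℝ) : ℝ × ℝ × ℝ :=
  (m * u + (u ^ 2 - v ^ 2) / 2 + (u ^ 3 / 3 - u * v ^ 2) / (2 * m),
   u * v + (u ^ 2 * v - v ^ 3 / 3) / (2 * m),
   (v ^ 2 - u ^ 2) / 2 - m * u)

section LeadingTerms

theorem isEquivalent_pow_succ_of_hasDerivAt {f f' : ℝ → ℝ} {x₀ c : ℝ} {n : ℕ} (hc : c ≠ 0)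
    (hf : ∀ x, HasDerivAt f (f' x) x) (hf' : f' ~[𝓝 x₀] fun x => c * (x - x₀) ^ n) :
    (fun x => f x - f x₀) ~[𝓝 x₀] fun x => c / (n + 1) * (x - x₀) ^ (n + 1) := by
  have hn : (n + 1 : ℝ) ≠ 0 := by positivity
  have hderiv (x : ℝ) : HasDerivAt (fun x => f x - c / (n + 1) * (x - x₀) ^ (n + 1))
      (f' x - c * (x - x₀) ^ n) x := by
    refine ((hf x).sub ((((hasDerivAt_id x).sub_const x₀).pow (n + 1)).const_mul
      (c / (n + 1)))).congr_deriv ?_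
    push_cast
    simp only [id_eq]
    field_simp
  have hlittle : (fun x => f' x - c * (x - x₀) ^ n) =o[𝓝 x₀] fun x => (x - x₀) ^ n :=
    (Asymptotics.isLittleO_const_mul_right_iff hc).1 hf'.isLittleO
  have hint := convex_univ.isLittleO_pow_succ_real (Set.mem_univ x₀)
    (fun x _ => (hderiv x).hasDerivWithinAt) (by simpa using hlittle)
  refine (Asymptotics.isLittleO_const_mul_right_iff (div_ne_zero hc hn)).2 ?_
  simpa [Pi.sub_def, sub_right_comm] using hint

theorem isEquivalent_cos_sub_one :
    (fun x => cos x - 1) ~[𝓝 0] fun x => -1 / 2 * x ^ 2 := by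
  have h := isEquivalent_pow_succ_of_hasDerivAt (x₀ := 0) (n := 1) (c := -1) (by norm_num)
    hasDerivAt_cos (by simpa using! isEquivalent_sin.neg)
  convert h using 2 <;> norm_num

theorem isEquivalent_sin_sub_self :
    (fun x => sin x - x) ~[𝓝 0] fun x => -1 / 6 * x ^ 3 := by
  have h := isEquivalent_pow_succ_of_hasDerivAt (x₀ := 0) (n := 2) (c := -1 / 2) (by norm_num)
    (fun x => (hasDerivAt_sin x).sub (hasDerivAt_id x))
    (by simpa only [sub_zero] using isEquivalent_cos_sub_one)
  convert h using 2 <;> norm_num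

theorem isEquivalent_cosh_sub_one :
    (fun x => cosh x - 1) ~[𝓝 0] fun x => 1 / 2 * x ^ 2 := by
  have h := isEquivalent_pow_succ_of_hasDerivAt (x₀ := 0) (n := 1) (c := 1) (by norm_num)
    hasDerivAt_cosh (by simpa using! isEquivalent_sinh)
  convert h using 2 <;> norm_num

theorem isEquivalent_sinh_sub_self :
    (fun x => sinh x - x) ~[𝓝 0] fun x => 1 / 6 * x ^ 3 := by
  have h := isEquivalent_pow_succ_of_hasDerivAt (x₀ := 0) (n := 2) (c := 1 / 2) (by norm_num)
    (fun x => (hasDerivAt_sinh x).sub (hasDerivAt_id x))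
    (by simpa only [sub_zero] using isEquivalent_cosh_sub_one)
  convert h using 2 <;> norm_num

theorem isEquivalent_exp_sub_one : (fun x => exp x - 1) ~[𝓝 0] id := by
  simpa using! (hasDerivAt_exp 0).isLittleO

theorem isEquivalent_exp_sub_one_sub_self :
    (fun x => exp x - 1 - x) ~[𝓝 0] fun x => 1 / 2 * x ^ 2 := by
  have h := isEquivalent_pow_succ_of_hasDerivAt (x₀ := 0) (n := 1) (c := 1) (by norm_num)
    (fun x => ((hasDerivAt_exp x).sub_const 1).sub (hasDerivAt_id x))
    (by simpa using! isEquivalent_exp_sub_one)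
  convert h using 2 <;> norm_num

theorem isEquivalent_arctan : arctan ~[𝓝 0] id := by
  simpa using! (hasDerivAt_arctan 0).isLittleO

end LeadingTerms

section Rescaling

variable {ι 𝕜 : Type*} [NormedField 𝕜] {l : Filter ι} {a x : ι → 𝕜} {f : 𝕜 → 𝕜} {r c : 𝕜} {n : ℕ}

theorem tendsto_zero_of_tendsto_div (ha : Tendsto a l (𝓝[≠] 0))
    (hx : Tendsto (fun t => x t / a t) l (𝓝 r)) : Tendsto x l (𝓝 0) := by
  obtain ⟨ha, hne⟩ := tendsto_nhdsWithin_iff.1 ha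
  refine (mul_zero r ▸ hx.mul ha).congr' ?_
  filter_upwards [hne] with t (ht : a t ≠ 0) using div_mul_cancel₀ _ ht

theorem tendsto_comp_div_pow (hf : f ~[𝓝 0] fun x => c * x ^ n) (ha : Tendsto a l (𝓝[≠] 0))
    (hx : Tendsto (fun t => x t / a t) l (𝓝 r)) :
    Tendsto (fun t => f (x t) / a t ^ n) l (𝓝 (c * r ^ n)) := by
  have hfx := hf.comp_tendsto (tendsto_zero_of_tendsto_div ha hx)
  refine (hfx.div (.refl (u := fun t => a t ^ n))).symm.tendsto_nhds ?_
  refine ((hx.pow n).const_mul c).congr fun t => ?_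
  simp [div_pow, mul_div_assoc]

theorem tendsto_comp_div (hf : f ~[𝓝 0] id) (ha : Tendsto a l (𝓝[≠] 0))
    (hx : Tendsto (fun t => x t / a t) l (𝓝 r)) :
    Tendsto (fun t => f (x t) / a t) l (𝓝 r) := by
  have hf' : f ~[𝓝 0] fun x => 1 * x ^ 1 := by simpa using! hf
  simpa using tendsto_comp_div_pow hf' ha hx

theorem tendsto_mul_const_div (ha : Tendsto a l (𝓝[≠] 0)) (s : 𝕜) :
    Tendsto (fun t => a t * s / a t) l (𝓝 s) := by
  refine tendsto_const_nhds.congr' ?_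
  filter_upwards [(tendsto_nhdsWithin_iff.1 ha).2] with t ht using (mul_div_cancel_left₀ s ht).symm

end Rescaling

section AxialBranch

variable {ι : Type*} {l : Filter ι} {a A φ : ι → ℝ} {m : ℝ}

theorem tendsto_phase_div (ha : Tendsto a l (𝓝[≠] 0))
    (hφ : Tendsto (fun t => φ t / a t) l (𝓝 m)) (u : ℝ) :
    Tendsto (fun t => (a t * u + φ t) / a t) l (𝓝 (u + m)) := by
  simpa only [add_div] using (tendsto_mul_const_div ha u).add hφ

theorem tendsto_axial_fst (hm : m ≠ 0) (ha : Tendsto a l (𝓝[≠] 0)) (hA : Tendsto A l (𝓝 (2 / m)))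
    (hφ : Tendsto (fun t => φ t / a t) l (𝓝 m)) (u v : ℝ) :
    Tendsto (fun t => ((a t ^ 2 + A t ^ 2) * a t * u
        + (a t ^ 2 - A t ^ 2) * sin (a t * u + φ t) * cosh (a t * v)
        + (A t ^ 2 - a t ^ 2) * sin (φ t)) / (2 * a t ^ 3 * A t))
      l (𝓝 (scaledEnneper m u v).1) := by
  obtain ⟨ha₀, hne⟩ := tendsto_nhdsWithin_iff.1 ha
  have hA₀ : 2 / m ≠ 0 := div_ne_zero two_ne_zero hm
  have hy := tendsto_phase_div ha hφ u
  have hv := tendsto_mul_const_div ha v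
  have hlead : Tendsto (fun t => u / A t) l (𝓝 (u / (2 / m))) := tendsto_const_nhds.div hA hA₀
  have hweight : Tendsto (fun t => (A t ^ 2 - a t ^ 2) / (2 * A t)) l
      (𝓝 (((2 / m) ^ 2 - 0 ^ 2) / (2 * (2 / m)))) :=
    ((hA.pow 2).sub (ha₀.pow 2)).div (hA.const_mul 2) (mul_ne_zero two_ne_zero hA₀)
  -- Writing `a u` as `(a u + φ) - φ` cancels the linear terms of the two sines.
  have hbracket : Tendsto (fun t => (sin (a t * u + φ t) - (a t * u + φ t)) / a t ^ 3
        - (sin (φ t) - φ t) / a t ^ 3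
        + sin (a t * u + φ t) / a t * ((cosh (a t * v) - 1) / a t ^ 2)) l
      (𝓝 (-1 / 6 * (u + m) ^ 3 - -1 / 6 * m ^ 3 + (u + m) * (1 / 2 * v ^ 2))) :=
    ((tendsto_comp_div_pow isEquivalent_sin_sub_self ha hy).sub
      (tendsto_comp_div_pow isEquivalent_sin_sub_self ha hφ)).add
      ((tendsto_comp_div isEquivalent_sin ha hy).mul
        (tendsto_comp_div_pow isEquivalent_cosh_sub_one ha hv))
  convert (hlead.sub (hweight.mul hbracket)).congr' ?_ using 2
  · simp only [scaledEnneper]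
    field_simp
    ring
  · filter_upwards [hne, hA.eventually_ne hA₀] with t (ht : a t ≠ 0) hAt
    field_simp
    ring

theorem tendsto_axial_snd (hm : m ≠ 0) (ha : Tendsto a l (𝓝[≠] 0)) (hA : Tendsto A l (𝓝 (2 / m)))
    (hφ : Tendsto (fun t => φ t / a t) l (𝓝 m)) (u v : ℝ) :
    Tendsto (fun t => ((A t ^ 2 - a t ^ 2) * a t * v
        - (a t ^ 2 + A t ^ 2) * cos (a t * u + φ t) * sinh (a t * v)) / (2 * a t ^ 3 * A t))
      l (𝓝 (scaledEnneper m u v).2.1) := by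
  obtain ⟨ha₀, hne⟩ := tendsto_nhdsWithin_iff.1 ha
  have hA₀ : 2 / m ≠ 0 := div_ne_zero two_ne_zero hm
  have hy := tendsto_phase_div ha hφ u
  have hv := tendsto_mul_const_div ha v
  have hlead : Tendsto (fun t => -v / A t) l (𝓝 (-v / (2 / m))) := tendsto_const_nhds.div hA hA₀
  have hweight : Tendsto (fun t => (a t ^ 2 + A t ^ 2) / (2 * A t)) l
      (𝓝 ((0 ^ 2 + (2 / m) ^ 2) / (2 * (2 / m)))) :=
    ((ha₀.pow 2).add (hA.pow 2)).div (hA.const_mul 2) (mul_ne_zero two_ne_zero hA₀)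
  have hbracket : Tendsto (fun t => (cos (a t * u + φ t) - 1) / a t ^ 2 * (sinh (a t * v) / a t)
        + (sinh (a t * v) - a t * v) / a t ^ 3) l
      (𝓝 (-1 / 2 * (u + m) ^ 2 * v + 1 / 6 * v ^ 3)) :=
    ((tendsto_comp_div_pow isEquivalent_cos_sub_one ha hy).mul
      (tendsto_comp_div isEquivalent_sinh ha hv)).add
      (tendsto_comp_div_pow isEquivalent_sinh_sub_self ha hv)
  convert (hlead.sub (hweight.mul hbracket)).congr' ?_ using 2
  · simp only [scaledEnneper]
    field_simp
    ring
  · filter_upwards [hne, hA.eventually_ne hA₀] with t (ht : a t ≠ 0) hAt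
    field_simp
    ring

theorem tendsto_axial_thd (ha : Tendsto a l (𝓝[≠] 0))
    (hφ : Tendsto (fun t => φ t / a t) l (𝓝 m)) (u v : ℝ) :
    Tendsto (fun t => (cos (a t * u + φ t) * cosh (a t * v) - cos (φ t)) / a t ^ 2)
      l (𝓝 (scaledEnneper m u v).2.2) := by
  have hy := tendsto_phase_div ha hφ u
  have hv := tendsto_mul_const_div ha v
  have hcos : Tendsto (fun t => cos (a t * u + φ t)) l (𝓝 1) := by
    simpa using! (continuous_cos.tendsto 0).comp (tendsto_zero_of_tendsto_div ha hy)
  have hsum : Tendsto (fun t => (cos (a t * u + φ t) - 1) / a t ^ 2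
        + cos (a t * u + φ t) * ((cosh (a t * v) - 1) / a t ^ 2)
        - (cos (φ t) - 1) / a t ^ 2) l
      (𝓝 (-1 / 2 * (u + m) ^ 2 + 1 * (1 / 2 * v ^ 2) - -1 / 2 * m ^ 2)) :=
    ((tendsto_comp_div_pow isEquivalent_cos_sub_one ha hy).add
      (hcos.mul (tendsto_comp_div_pow isEquivalent_cosh_sub_one ha hv))).sub
      (tendsto_comp_div_pow isEquivalent_cos_sub_one ha hφ)
  convert hsum.congr fun t => ?_ using 2
  · simp only [scaledEnneper]
    ring
  · ring

end AxialBranch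

section ExponentialBranch

variable {ι : Type*} {l : Filter ι} {b B : ι → ℝ} {m : ℝ}

theorem tendsto_one_of_tendsto_sub_one_div (hb : Tendsto b l (𝓝[≠] 0))
    (hB : Tendsto (fun t => (B t - 1) / b t) l (𝓝 m)) : Tendsto B l (𝓝 1) :=
  tendsto_sub_nhds_zero_iff.1 (tendsto_zero_of_tendsto_div hb hB)

-- The coefficient of `(β - 1) ^ k` vanishes to order `3 - k` at `x = y = 0`, as the limit requires.
theorem exponential_fst_eq (β x y : ℝ) :
    exp (-x) * ((β * (β * (exp (2 * x) - 1) + 2) - 2) * cos y - 2 * exp x * (β * x + β - 1)) =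
      2 * ((sinh x - x) + sinh x * (cos y - 1)
        + (β - 1) * ((exp x - 1 - x) + exp x * (cos y - 1))
        + (β - 1) ^ 2 * (sinh x * cos y)) := by
  have hinv : exp x * exp (-x) = 1 := by rw [← exp_add, add_neg_cancel, exp_zero]
  rw [two_mul x, exp_add, sinh_eq]
  linear_combination (β ^ 2 * exp x * cos y - 2 * (β * x + β - 1)) * hinv

theorem exponential_snd_eq (β x y : ℝ) :
    exp (-x) * ((β * exp (2 * x) - β + 2) * sin y - 2 * y * exp x) =
      2 * ((sin y - y) + (cosh x - 1) * sin y + (β - 1) * (sinh x * sin y)) := by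
  have hinv : exp x * exp (-x) = 1 := by rw [← exp_add, add_neg_cancel, exp_zero]
  rw [two_mul x, exp_add, sinh_eq, cosh_eq]
  linear_combination (β * exp x * sin y - 2 * y) * hinv

theorem tendsto_exponential_fst (hm : m ≠ 0) (hb : Tendsto b l (𝓝[≠] 0))
    (hB : Tendsto (fun t => (B t - 1) / b t) l (𝓝 m)) (u v : ℝ) :
    Tendsto (fun t => exp (-(b t * u)) *
        ((B t * (B t * (exp (2 * b t * u) - 1) + 2) - 2) * cos (b t * v)
          - 2 * exp (b t * u) * (b t * B t * u + B t - 1))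
        / (2 * b t ^ 2 * B t * (B t - 1)))
      l (𝓝 (scaledEnneper m u v).1) := by
  have hne := (tendsto_nhdsWithin_iff.1 hb).2
  have hB₁ := tendsto_one_of_tendsto_sub_one_div hb hB
  have hu := tendsto_mul_const_div hb u
  have hv := tendsto_mul_const_div hb v
  have hexp : Tendsto (fun t => exp (b t * u)) l (𝓝 1) := by
    simpa using! (continuous_exp.tendsto 0).comp (tendsto_zero_of_tendsto_div hb hu)
  have hcos : Tendsto (fun t => cos (b t * v)) l (𝓝 1) := by
    simpa using! (continuous_cos.tendsto 0).comp (tendsto_zero_of_tendsto_div hb hv)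
  have hsinh := tendsto_comp_div isEquivalent_sinh hb hu
  have hcos₂ := tendsto_comp_div_pow isEquivalent_cos_sub_one hb hv
  have hcubic : Tendsto (fun t => (sinh (b t * u) - b t * u) / b t ^ 3
        + sinh (b t * u) / b t * ((cos (b t * v) - 1) / b t ^ 2)) l
      (𝓝 (1 / 6 * u ^ 3 + u * (-1 / 2 * v ^ 2))) :=
    (tendsto_comp_div_pow isEquivalent_sinh_sub_self hb hu).add (hsinh.mul hcos₂)
  have hquadratic : Tendsto (fun t => (exp (b t * u) - 1 - b t * u) / b t ^ 2
        + exp (b t * u) * ((cos (b t * v) - 1) / b t ^ 2)) l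
      (𝓝 (1 / 2 * u ^ 2 + 1 * (-1 / 2 * v ^ 2))) :=
    (tendsto_comp_div_pow isEquivalent_exp_sub_one_sub_self hb hu).add (hexp.mul hcos₂)
  have hlinear : Tendsto (fun t => sinh (b t * u) / b t * cos (b t * v)) l (𝓝 (u * 1)) :=
    hsinh.mul hcos
  convert ((((hcubic.div hB hm).add hquadratic).add (hB.mul hlinear)).div hB₁ one_ne_zero).congr' ?_
    using 2
  · simp only [scaledEnneper]
    field_simp
    ring
  · filter_upwards [hne, hB.eventually_ne hm, hB₁.eventually_ne one_ne_zero]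
      with t (ht : b t ≠ 0) hBt hBt₁
    have hBt : B t - 1 ≠ 0 := (div_ne_zero_iff.1 hBt).1
    rw [mul_assoc 2 (b t) u, mul_comm (b t) (B t), mul_assoc (B t) (b t) u, exponential_fst_eq]
    simp only [Pi.div_apply]
    field_simp

theorem tendsto_exponential_snd (hm : m ≠ 0) (hb : Tendsto b l (𝓝[≠] 0))
    (hB : Tendsto (fun t => (B t - 1) / b t) l (𝓝 m)) (u v : ℝ) :
    Tendsto (fun t => exp (-(b t * u)) *
        ((B t * exp (2 * b t * u) - B t + 2) * sin (b t * v) - 2 * b t * v * exp (b t * u))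
        / (2 * b t ^ 2 * (B t - 1)))
      l (𝓝 (scaledEnneper m u v).2.1) := by
  have hne := (tendsto_nhdsWithin_iff.1 hb).2
  have hu := tendsto_mul_const_div hb u
  have hv := tendsto_mul_const_div hb v
  have hsin := tendsto_comp_div isEquivalent_sin hb hv
  have hcubic : Tendsto (fun t => (sin (b t * v) - b t * v) / b t ^ 3
        + (cosh (b t * u) - 1) / b t ^ 2 * (sin (b t * v) / b t)) l
      (𝓝 (-1 / 6 * v ^ 3 + 1 / 2 * u ^ 2 * v)) :=
    (tendsto_comp_div_pow isEquivalent_sin_sub_self hb hv).add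
      ((tendsto_comp_div_pow isEquivalent_cosh_sub_one hb hu).mul hsin)
  have hquadratic : Tendsto (fun t => sinh (b t * u) / b t * (sin (b t * v) / b t)) l
      (𝓝 (u * v)) :=
    (tendsto_comp_div isEquivalent_sinh hb hu).mul hsin
  convert ((hcubic.div hB hm).add hquadratic).congr' ?_ using 2
  · simp only [scaledEnneper]
    field_simp
    ring
  · filter_upwards [hne, hB.eventually_ne hm] with t (ht : b t ≠ 0) hBt
    have hBt : B t - 1 ≠ 0 := (div_ne_zero_iff.1 hBt).1
    rw [mul_assoc 2 (b t) u, mul_assoc 2 (b t) v, exponential_snd_eq]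
    simp only [Pi.div_apply]
    field_simp

theorem tendsto_exponential_thd (hb : Tendsto b l (𝓝[≠] 0))
    (hB : Tendsto (fun t => (B t - 1) / b t) l (𝓝 m)) (u v : ℝ) :
    Tendsto (fun t => -((b t * B t * u + exp (-(b t * u)) * cos (b t * v) - 1)
        / (b t ^ 2 * B t)))
      l (𝓝 (scaledEnneper m u v).2.2) := by
  have hne := (tendsto_nhdsWithin_iff.1 hb).2
  have hB₁ := tendsto_one_of_tendsto_sub_one_div hb hB
  have hu : Tendsto (fun t => -(b t * u) / b t) l (𝓝 (-u)) := by
    simpa only [mul_neg] using tendsto_mul_const_div hb (-u)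
  have hexp : Tendsto (fun t => exp (-(b t * u))) l (𝓝 1) := by
    simpa using! (continuous_exp.tendsto 0).comp (tendsto_zero_of_tendsto_div hb hu)
  have hsum : Tendsto (fun t => (B t - 1) / b t * u
        + (exp (-(b t * u)) - 1 - -(b t * u)) / b t ^ 2
        + exp (-(b t * u)) * ((cos (b t * v) - 1) / b t ^ 2)) l
      (𝓝 (m * u + 1 / 2 * (-u) ^ 2 + 1 * (-1 / 2 * v ^ 2))) :=
    ((hB.mul_const u).add (tendsto_comp_div_pow isEquivalent_exp_sub_one_sub_self hb hu)).add
      (hexp.mul (tendsto_comp_div_pow isEquivalent_cos_sub_one hb (tendsto_mul_const_div hb v)))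
  convert (hsum.div hB₁ one_ne_zero).neg.congr' ?_ using 2
  · simp only [scaledEnneper]
    ring
  · filter_upwards [hne, hB₁.eventually_ne one_ne_zero] with t (ht : b t ≠ 0) hBt
    simp only [Pi.div_apply]
    field_simp
    ring

end ExponentialBranch

section ParametersNearPiDivFour

theorem sin_sub_cos_eq_sqrt_two_mul_sin (θ : ℝ) : sin θ - cos θ = √2 * sin (θ - π / 4) := by
  have h : √2 ^ 2 = 2 := sq_sqrt zero_le_two
  rw [sin_sub, cos_pi_div_four, sin_pi_div_four]
  linear_combination (cos θ / 2 - sin θ / 2) * h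

theorem eventually_cos_lt_sin : ∀ᶠ θ in 𝓝[>] (π / 4), cos θ < sin θ := by
  filter_upwards [Ioo_mem_nhdsGT (show π / 4 < π by linarith [pi_pos])] with θ hθ
  have : 0 < sin (θ - π / 4) :=
    sin_pos_of_pos_of_lt_pi (by linarith [hθ.1]) (by linarith [hθ.2, pi_pos])
  rw [← sub_pos, sin_sub_cos_eq_sqrt_two_mul_sin]
  positivity

theorem eventually_sin_lt_cos : ∀ᶠ θ in 𝓝[<] (π / 4), sin θ < cos θ := by
  filter_upwards [Ioo_mem_nhdsLT (show 0 < π / 4 by positivity)] with θ hθ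
  have : sin (θ - π / 4) < 0 :=
    sin_neg_of_neg_of_neg_pi_lt (by linarith [hθ.2]) (by linarith [hθ.1, pi_pos])
  rw [← sub_neg, sin_sub_cos_eq_sqrt_two_mul_sin]
  exact mul_neg_of_pos_of_neg (by positivity) this

theorem tendsto_sqrt_nhdsNE_zero {ι : Type*} {l : Filter ι} {f : ι → ℝ} (hf : Tendsto f l (𝓝 0))
    (hpos : ∀ᶠ t in l, 0 < f t) : Tendsto (fun t => √(f t)) l (𝓝[≠] 0) :=
  tendsto_nhdsWithin_iff.2
    ⟨by simpa using hf.sqrt, hpos.mono fun _ ht => (sqrt_pos.2 ht).ne'⟩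

theorem two_rpow_one_div_four_sq : ((2 : ℝ) ^ (1 / 4 : ℝ)) ^ 2 = √2 := by
  rw [sqrt_eq_rpow, ← rpow_natCast, ← rpow_mul zero_le_two]
  norm_num

theorem sqrt_sqrt_two_div_two : √(√2 / 2) = ((2 : ℝ) ^ (1 / 4 : ℝ))⁻¹ := by
  rw [sqrt_div_self, ← two_rpow_one_div_four_sq, ← inv_pow, sqrt_sq (by positivity)]

theorem tendsto_sqrt_cos_pi_div_four :
    Tendsto (fun θ => √(cos θ)) (𝓝 (π / 4)) (𝓝 ((2 : ℝ) ^ (1 / 4 : ℝ))⁻¹) := by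
  simpa only [cos_pi_div_four, sqrt_sqrt_two_div_two] using (continuous_cos.tendsto (π / 4)).sqrt

theorem tendsto_sqrt_sin_pi_div_four :
    Tendsto (fun θ => √(sin θ)) (𝓝 (π / 4)) (𝓝 ((2 : ℝ) ^ (1 / 4 : ℝ))⁻¹) := by
  simpa only [sin_pi_div_four, sqrt_sqrt_two_div_two] using (continuous_sin.tendsto (π / 4)).sqrt

theorem eventually_cos_pos : ∀ᶠ θ in 𝓝 (π / 4), 0 < cos θ :=
  (continuous_cos.tendsto (π / 4)).eventually_const_lt (by rw [cos_pi_div_four]; positivity)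

theorem tendsto_sqrt_sin_sub_cos :
    Tendsto (fun θ => √(sin θ - cos θ)) (𝓝[>] (π / 4)) (𝓝[≠] 0) := by
  refine tendsto_sqrt_nhdsNE_zero ?_ (eventually_cos_lt_sin.mono fun _ => sub_pos.2)
  have h := (continuous_sin.sub continuous_cos).tendsto (π / 4)
  simpa using! h.mono_left nhdsWithin_le_nhds

theorem tendsto_sqrt_cos_sub_sin :
    Tendsto (fun θ => √(cos θ - sin θ)) (𝓝[<] (π / 4)) (𝓝[≠] 0) := by
  refine tendsto_sqrt_nhdsNE_zero ?_ (eventually_sin_lt_cos.mono fun _ => sub_pos.2)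
  have h := (continuous_cos.sub continuous_sin).tendsto (π / 4)
  simpa using! h.mono_left nhdsWithin_le_nhds

theorem tendsto_sqrt_div_cos_div_sqrt {l : Filter ℝ} (hl : l ≤ 𝓝 (π / 4)) {f : ℝ → ℝ}
    (hf : ∀ᶠ θ in l, 0 < f θ) :
    Tendsto (fun θ => √(f θ / cos θ) / √(f θ)) l (𝓝 ((2 : ℝ) ^ (1 / 4 : ℝ))) := by
  have h := (tendsto_sqrt_cos_pi_div_four.inv₀ (by positivity)).mono_left hl
  rw [inv_inv] at h
  refine h.congr' ?_
  filter_upwards [hf] with θ hθ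
  rw [sqrt_div hθ.le, div_right_comm, div_self (sqrt_pos.2 hθ).ne', one_div]

theorem tendsto_arctan_sqrt_tan_sub_one_div :
    Tendsto (fun θ => arctan √(tan θ - 1) / √(sin θ - cos θ)) (𝓝[>] (π / 4))
      (𝓝 ((2 : ℝ) ^ (1 / 4 : ℝ))) := by
  refine tendsto_comp_div isEquivalent_arctan tendsto_sqrt_sin_sub_cos ?_
  refine (tendsto_sqrt_div_cos_div_sqrt nhdsWithin_le_nhds
    (eventually_cos_lt_sin.mono fun _ => sub_pos.2)).congr' ?_
  filter_upwards [nhdsWithin_le_nhds eventually_cos_pos] with θ hθ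
  rw [sub_div, div_self hθ.ne', tan_eq_sin_div_cos]

theorem tendsto_sqrt_one_sub_tan_div :
    Tendsto (fun θ => √(1 - tan θ) / √(cos θ - sin θ)) (𝓝[<] (π / 4))
      (𝓝 ((2 : ℝ) ^ (1 / 4 : ℝ))) := by
  refine (tendsto_sqrt_div_cos_div_sqrt nhdsWithin_le_nhds
    (eventually_sin_lt_cos.mono fun _ => sub_pos.2)).congr' ?_
  filter_upwards [nhdsWithin_le_nhds eventually_cos_pos] with θ hθ
  rw [sub_div, div_self hθ.ne', tan_eq_sin_div_cos]

end ParametersNearPiDivFour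

theorem enneperMax_eq_scaledEnneper (u v : ℝ) :
    EnneperMax u v = scaledEnneper ((2 : ℝ) ^ (1 / 4 : ℝ)) u v := by
  have hscale : 1 / √2 = ((2 : ℝ) ^ (1 / 4 : ℝ)) ^ 2 / 2 := by
    rw [two_rpow_one_div_four_sq, sqrt_div_self, one_div]
  have hinv : (2 : ℝ) ^ (-(1 : ℝ) / 4) = ((2 : ℝ) ^ (1 / 4 : ℝ))⁻¹ := by
    rw [neg_div, rpow_neg zero_le_two]
  have hm : (2 : ℝ) ^ (1 / 4 : ℝ) ≠ 0 := by positivity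
  simp only [EnneperMax, scaledEnneper, hscale, hinv, Prod.mk.injEq]
  generalize (2 : ℝ) ^ (1 / 4 : ℝ) = m at hm
  refine ⟨?_, ?_, ?_⟩ <;> field_simp <;> ring

theorem tendsto_XA (u v : ℝ) :
    Tendsto (fun θ => XA θ u v) (𝓝[>] (π / 4))
      (𝓝 (scaledEnneper ((2 : ℝ) ^ (1 / 4 : ℝ)) u v)) := by
  have hm : (2 : ℝ) ^ (1 / 4 : ℝ) ≠ 0 := by positivity
  have ha := tendsto_sqrt_sin_sub_cos
  have hφ := tendsto_arctan_sqrt_tan_sub_one_div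
  have hA : Tendsto (fun θ => √(cos θ) + √(sin θ)) (𝓝[>] (π / 4))
      (𝓝 (2 / (2 : ℝ) ^ (1 / 4 : ℝ))) := by
    rw [div_eq_mul_inv 2, two_mul]
    exact (tendsto_sqrt_cos_pi_div_four.add tendsto_sqrt_sin_pi_div_four).mono_left
      nhdsWithin_le_nhds
  exact (tendsto_axial_fst hm ha hA hφ u v).prodMk_nhds
    ((tendsto_axial_snd hm ha hA hφ u v).prodMk_nhds (tendsto_axial_thd ha hφ u v))

theorem tendsto_XB (u v : ℝ) :
    Tendsto (fun θ => XB θ u v) (𝓝[<] (π / 4))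
      (𝓝 (scaledEnneper ((2 : ℝ) ^ (1 / 4 : ℝ)) u v)) := by
  have hm : (2 : ℝ) ^ (1 / 4 : ℝ) ≠ 0 := by positivity
  have hb := tendsto_sqrt_cos_sub_sin
  have hB : Tendsto (fun θ => (1 + √(1 - tan θ) - 1) / √(cos θ - sin θ)) (𝓝[<] (π / 4))
      (𝓝 ((2 : ℝ) ^ (1 / 4 : ℝ))) := by
    simpa only [add_sub_cancel_left] using tendsto_sqrt_one_sub_tan_div
  exact (tendsto_exponential_fst hm hb hB u v).prodMk_nhds
    ((tendsto_exponential_snd hm hb hB u v).prodMk_nhds (tendsto_exponential_thd hb hB u v))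

/-- At every fixed (u,v), both one-sided limits of X^θ(u,v) as
θ → π/4 exist and equal the maximal Enneper-type surface: the family X^θ is continuous
in θ at θ = π/4. -/
theorem family_continuous_at_enneper (u v : ℝ) :
    Tendsto (fun θ : ℝ => XA θ u v) (𝓝[>] (π / 4)) (𝓝 (EnneperMax u v)) ∧
    Tendsto (fun θ : ℝ => XB θ u v) (𝓝[<] (π / 4)) (𝓝 (EnneperMax u v)) := by
  rw [enneperMax_eq_scaledEnneper]
  exact ⟨tendsto_XA u v, tendsto_XB u v⟩
end

section
/- For δ ∈ (0,1] define X_CL^δ : ℝ² → ℝ³ by X_CL^δ(u,v) = ( e^{−δu}·[ ((δ² + 1)e^{2δu} − 1)·cos(δv) − δ(2u + δ)e^{δu} ] / (2δ³), (e^{δu}·sin(δv) − δv)/δ², e^{−δu}·[ −((δ² − 1)e^{2δu} + 1)·cos(δv) − δ(2u − δ)e^{δu} ] / (2δ³) ). Then for every fixed (u,v) ∈ ℝ², the limit as δ → 0⁺ exists and lim_{δ→0⁺} X_CL^δ(u,v) = ( (u − uv² + u³/3)/2, uv, (−u − uv² + u³/3)/2 ), i.e., the family X_CL^δ converges pointwise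 to the parametrization of the maximal catenoid with lightlike axis. (This is the continuous deformation from the maximal Bonnet-type surface with lightlike axial direction, at δ = 1, to the maximal catenoid with lightlike axis.) -/
/-!
Put `z = u + iv`. For `δ ≠ 0` the three coordinates of `XCL δ u v` are `Re (S + E₁)`, `Im E₂` and
`Re (S - E₁)`, where `S = (sinh (δz) - δz) / δ³`, `E₁ = (exp (δz) - 1) / (2δ)` and
`E₂ = (exp (δz) - 1 - δz) / δ²` are scaled Taylor remainders. As `δ → 0` they converge to `z³ / 6`,
`z / 2` and `z² / 2`, whose real and imaginary parts make up the catenoid.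
-/

open Real Filter Topology

/-- The deformation family X_CL^δ joining the maximal Bonnet-type surface with
lightlike axial direction (δ = 1) to the maximal catenoid with lightlike axis. -/
noncomputable def XCL (δ u v : ℝ) : ℝ × ℝ × ℝ :=
  (Real.exp (-(δ * u)) *
      (((δ ^ 2 + 1) * Real.exp (2 * δ * u) - 1) * Real.cos (δ * v)
        - δ * (2 * u + δ) * Real.exp (δ * u)) / (2 * δ ^ 3),
   (Real.exp (δ * u) * Real.sin (δ * v) - δ * v) / δ ^ 2,
   Real.exp (-(δ * u)) *
      (-(((δ ^ 2 - 1) * Real.exp (2 * δ * u) + 1) * Real.cos (δ * v))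
        - δ * (2 * u - δ) * Real.exp (δ * u)) / (2 * δ ^ 3))

section TaylorRemainders

variable {α : Type*} {l : Filter α} {t z : α → ℂ} {w : ℂ}

theorem tendsto_cexp_sub_sum_div_pow (ht : Tendsto t l (𝓝[≠] 0)) (hz : Tendsto z l (𝓝 w)) (n : ℕ) :
    Tendsto (fun a => (Complex.exp (t a * z a)
        - ∑ i ∈ Finset.range n, (t a * z a) ^ i / i.factorial) / t a ^ n)
      l (𝓝 (w ^ n / n.factorial)) := by
  have htz : Tendsto (fun a => t a * z a) l (𝓝 0) := by
    simpa using (tendsto_nhds_of_tendsto_nhdsWithin ht).mul hz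
  have remainder_isLittleO : (fun a => Complex.exp (t a * z a)
      - ∑ i ∈ Finset.range (n + 1), (t a * z a) ^ i / i.factorial) =o[l] fun a => t a ^ n := by
    refine ((Complex.exp_sub_sum_range_succ_isLittleO_pow n).comp_tendsto htz).trans_isBigO ?_
    simpa [Function.comp_def, mul_pow] using
      (Asymptotics.isBigO_refl (fun a => t a ^ n) l).mul ((hz.pow n).isBigO_one ℂ)
  have leading_term : Tendsto (fun a => z a ^ n / n.factorial) l (𝓝 (w ^ n / n.factorial)) :=
    (hz.pow n).div_const _
  rw [← zero_add (w ^ n / _)]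
  refine (remainder_isLittleO.tendsto_div_nhds_zero.add leading_term).congr' ?_
  filter_upwards [tendsto_nhdsWithin_iff.1 ht |>.2] with a (ha : t a ≠ 0)
  rw [Finset.sum_range_succ]
  field_simp
  ring

theorem tendsto_csinh_sub_div_cube (ht : Tendsto t l (𝓝[≠] 0)) (hz : Tendsto z l (𝓝 w)) :
    Tendsto (fun a => (Complex.sinh (t a * z a) - t a * z a) / t a ^ 3) l (𝓝 (w ^ 3 / 6)) := by
  -- The even Taylor terms of `exp` cancel in `sinh`.
  convert ((tendsto_cexp_sub_sum_div_pow ht hz 3).sub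
    (tendsto_cexp_sub_sum_div_pow ht hz.neg 3)).div_const 2 using 2
  · simp only [Complex.sinh, mul_neg, Finset.sum_range_succ, Finset.sum_range_zero, Nat.factorial]
    push_cast
    ring
  · simp only [Nat.factorial]
    push_cast
    ring

end TaylorRemainders

theorem XCL_eq_re_im {δ : ℝ} (hδ : δ ≠ 0) (u v : ℝ) :
    XCL δ u v =
      let z : ℂ := ⟨u, v⟩
      let S := (Complex.sinh (δ * z) - δ * z) / (δ : ℂ) ^ 3
      let E₁ := (Complex.exp (δ * z) - 1) / δ / 2
      let E₂ := (Complex.exp (δ * z) - 1 - δ * z) / (δ : ℂ) ^ 2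
      ((S + E₁).re, E₂.im, (S - E₁).re) := by
  have exp_two_mul : exp (2 * δ * u) = exp (δ * u) ^ 2 := by
    rw [← exp_nat_mul, Nat.cast_ofNat, mul_assoc]
  simp only [XCL, exp_two_mul, exp_neg, Complex.sinh, ← Complex.ofReal_pow, Complex.add_re,
    Complex.sub_re, Complex.sub_im, Complex.neg_re, Complex.neg_im, Complex.div_ofReal_re,
    Complex.div_ofReal_im, Complex.div_ofNat_re, Complex.exp_re, Complex.exp_im,
    Complex.re_ofReal_mul, Complex.im_ofReal_mul, Complex.one_re, Complex.one_im, cos_neg]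
  congr 2 <;> field_simp <;> ring

theorem lightlike_catenoid_eq_re_im (u v : ℝ) :
    ((u - u * v ^ 2 + u ^ 3 / 3) / 2, u * v, (-u - u * v ^ 2 + u ^ 3 / 3) / 2) =
      let z : ℂ := ⟨u, v⟩
      ((z ^ 3 / 6 + z / 2).re, (z ^ 2 / 2).im, (z ^ 3 / 6 - z / 2).re) := by
  simp only [Complex.add_re, Complex.sub_re, Complex.div_ofNat_re, Complex.div_ofNat_im, pow_succ,
    pow_zero, one_mul, Complex.mul_re, Complex.mul_im, Prod.mk.injEq]
  refine ⟨?_, ?_, ?_⟩ <;> ring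

theorem XCL_tendsto_lightlike_catenoid_general {α : Type*} {l : Filter α} {δ u v : α → ℝ}
    {u₀ v₀ : ℝ} (hδ : Tendsto δ l (𝓝[≠] 0)) (hu : Tendsto u l (𝓝 u₀)) (hv : Tendsto v l (𝓝 v₀)) :
    Tendsto (fun a => XCL (δ a) (u a) (v a)) l
      (𝓝 ((u₀ - u₀ * v₀ ^ 2 + u₀ ^ 3 / 3) / 2, u₀ * v₀,
        (-u₀ - u₀ * v₀ ^ 2 + u₀ ^ 3 / 3) / 2)) := by
  obtain ⟨δ_tendsto_zero, δ_ne_zero⟩ := tendsto_nhdsWithin_iff.1 hδ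
  have ht : Tendsto (fun a => (δ a : ℂ)) l (𝓝[≠] 0) :=
    tendsto_nhdsWithin_iff.2 ⟨δ_tendsto_zero.ofReal, by simpa using δ_ne_zero⟩
  have hz : Tendsto (fun a => (⟨u a, v a⟩ : ℂ)) l (𝓝 ⟨u₀, v₀⟩) :=
    (Complex.equivRealProdCLM.symm.continuous.tendsto (u₀, v₀)).comp (hu.prodMk_nhds hv)
  have hS := tendsto_csinh_sub_div_cube ht hz
  have hE₁ : Tendsto (fun a => (Complex.exp (δ a * ⟨u a, v a⟩) - 1) / δ a / 2) l
      (𝓝 (⟨u₀, v₀⟩ / 2)) := by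
    simpa using (tendsto_cexp_sub_sum_div_pow ht hz 1).div_const 2
  have hE₂ : Tendsto (fun a => (Complex.exp (δ a * ⟨u a, v a⟩) - 1 - δ a * ⟨u a, v a⟩)
      / (δ a : ℂ) ^ 2) l (𝓝 (⟨u₀, v₀⟩ ^ 2 / 2)) := by
    simpa [Finset.sum_range_succ, sub_sub] using tendsto_cexp_sub_sum_div_pow ht hz 2
  rw [lightlike_catenoid_eq_re_im]
  refine Tendsto.congr' (δ_ne_zero.mono fun a ha => (XCL_eq_re_im ha (u a) (v a)).symm) ?_
  exact ((Complex.continuous_re.tendsto _).comp (hS.add hE₁)).prodMk_nhds <|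
    ((Complex.continuous_im.tendsto _).comp hE₂).prodMk_nhds <|
    (Complex.continuous_re.tendsto _).comp (hS.sub hE₁)

/-- At every fixed (u,v), X_CL^δ(u,v) converges as δ → 0⁺ to the
parametrization of the maximal catenoid with lightlike axis. -/
theorem XCL_tendsto_lightlike_catenoid (u v : ℝ) :
    Tendsto (fun δ : ℝ => XCL δ u v) (𝓝[>] (0 : ℝ))
      (𝓝 ((u - u * v ^ 2 + u ^ 3 / 3) / 2, u * v, (-u - u * v ^ 2 + u ^ 3 / 3) / 2)) :=
  XCL_tendsto_lightlike_catenoid_general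
    (tendsto_id'.2 (nhdsGT_le_nhdsNE 0)) tendsto_const_nhds tendsto_const_nhds
end

section
/- For ψ ∈ (−π/4, 0] set k = cos 2ψ > 0 and S = 2ψ + π/2, and define X_P^ψ : ℝ² → ℝ³ by X_P^ψ(u,v) = ( [u·cos ψ·√k − sin ψ·sin((u + S)√k)·cosh(v√k)]/√k, [v·sin ψ·√k − cos ψ·cos((u + S)√k)·sinh(v√k)]/√k, cos((u + S)√k)·cosh(v√k) ). Then for every fixed (u,v) ∈ ℝ², the limit as ψ → (−π/4)⁺ exists and lim_{ψ→(−π/4)⁺} X_P^ψ(u,v) = (√2·u, −√2·v, 1). (This is the continuous deformation from the maximal catenoid with spacelike axis, at ψ = 0, to the spacelike plane {x₀ = 1}.) -/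
open Real Filter Topology

/-- The deformation family X_P^ψ joining the maximal catenoid with spacelike axis
(ψ = 0) to the spacelike plane, where k = cos 2ψ and S = 2ψ + π/2. -/
noncomputable def XP (ψ u v : ℝ) : ℝ × ℝ × ℝ :=
  let k := Real.cos (2 * ψ)
  let S := 2 * ψ + π / 2
  ((u * Real.cos ψ * Real.sqrt k
      - Real.sin ψ * Real.sin ((u + S) * Real.sqrt k) * Real.cosh (v * Real.sqrt k))
      / Real.sqrt k,
   (v * Real.sin ψ * Real.sqrt k
      - Real.cos ψ * Real.cos ((u + S) * Real.sqrt k) * Real.sinh (v * Real.sqrt k))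
      / Real.sqrt k,
   Real.cos ((u + S) * Real.sqrt k) * Real.cosh (v * Real.sqrt k))

/-!
Dividing by `√k` turns the two singular quotients into difference quotients of `sin` and `sinh`
at `0`, with increments `c * √k` for `c = u + S` and `c = v`, where `√k → 0⁺`. They converge to
`u` and `v` because `S → 0`, while every other factor is continuous at `ψ = -π/4`.
-/

section ScaledDifferenceQuotient

variable {ι 𝕜 E : Type*} [NontriviallyNormedField 𝕜] [NormedAddCommGroup E] [NormedSpace 𝕜 E]

theorem tendsto_inv_smul_sub_of_hasDerivAt {l : Filter ι} {f : 𝕜 → E} {f' : E} {x : 𝕜}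
    (hf : HasDerivAt f f' x) {c s : ι → 𝕜} {c₀ : 𝕜} (hc : Tendsto c l (𝓝 c₀))
    (hs : Tendsto s l (𝓝[≠] 0)) :
    Tendsto (fun i => (s i)⁻¹ • (f (x + c i * s i) - f x)) l (𝓝 (c₀ • f')) := by
  have hs₀ : Tendsto s l (𝓝 0) := tendsto_nhds_of_tendsto_nhdsWithin hs
  have hs_ne : ∀ᶠ i in l, s i ≠ 0 := hs.eventually_mem self_mem_nhdsWithin
  have hinc : Tendsto (fun i => c i * s i) l (𝓝 0) := by
    simpa only [mul_zero] using hc.mul hs₀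
  have hscale : Tendsto (fun i => (s i)⁻¹ • (c i * s i)) l (𝓝 c₀) := by
    refine hc.congr' ?_
    filter_upwards [hs_ne] with i hi
    rw [smul_eq_mul, mul_comm (c i), inv_mul_cancel_left₀ hi]
  simpa only [ContinuousLinearMap.toSpanSingleton_apply] using
    hf.hasFDerivAt.hasFDerivWithinAt.lim hinc (.of_forall fun _ => Set.mem_univ _) hscale

end ScaledDifferenceQuotient

theorem tendsto_sin_mul_div {ι : Type*} {l : Filter ι} {c s : ι → ℝ} {c₀ : ℝ}
    (hc : Tendsto c l (𝓝 c₀)) (hs : Tendsto s l (𝓝[≠] 0)) :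
    Tendsto (fun i => sin (c i * s i) / s i) l (𝓝 c₀) := by
  simpa [div_eq_inv_mul] using tendsto_inv_smul_sub_of_hasDerivAt (hasDerivAt_sin 0) hc hs

theorem tendsto_sinh_mul_div {ι : Type*} {l : Filter ι} {c s : ι → ℝ} {c₀ : ℝ}
    (hc : Tendsto c l (𝓝 c₀)) (hs : Tendsto s l (𝓝[≠] 0)) :
    Tendsto (fun i => sinh (c i * s i) / s i) l (𝓝 c₀) := by
  simpa [div_eq_inv_mul] using tendsto_inv_smul_sub_of_hasDerivAt (hasDerivAt_sinh 0) hc hs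

theorem tendsto_sqrt_cos_two_mul_nhdsGT :
    Tendsto (fun ψ : ℝ => √(cos (2 * ψ))) (𝓝[>] (-(π / 4))) (𝓝[>] 0) := by
  refine tendsto_nhdsWithin_iff.2 ⟨?_, ?_⟩
  · refine (Continuous.tendsto' (by fun_prop) _ _ ?_).mono_left nhdsWithin_le_nhds
    rw [show 2 * -(π / 4) = -(π / 2) by ring, cos_neg, cos_pi_div_two, sqrt_zero]
  · filter_upwards [Ioo_mem_nhdsGT (show -(π / 4) < π / 4 by linarith [pi_pos])] with ψ hψ
    exact sqrt_pos.2 (cos_pos_of_mem_Ioo ⟨by linarith [hψ.1], by linarith [hψ.2]⟩)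

theorem tendsto_sqrt_cos_two_mul_nhdsNE :
    Tendsto (fun ψ : ℝ => √(cos (2 * ψ))) (𝓝[>] (-(π / 4))) (𝓝[≠] 0) :=
  tendsto_sqrt_cos_two_mul_nhdsGT.mono_right (nhdsGT_le_nhdsNE 0)

theorem tendsto_sin_nhdsGT_neg_pi_div_four :
    Tendsto sin (𝓝[>] (-(π / 4))) (𝓝 (-(√2 / 2))) :=
  (continuous_sin.tendsto' _ _ (by simp)).mono_left nhdsWithin_le_nhds

theorem tendsto_cos_nhdsGT_neg_pi_div_four :
    Tendsto cos (𝓝[>] (-(π / 4))) (𝓝 (√2 / 2)) :=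
  (continuous_cos.tendsto' _ _ (by simp)).mono_left nhdsWithin_le_nhds

theorem tendsto_add_two_mul_add_pi_div_two (u : ℝ) :
    Tendsto (fun ψ : ℝ => u + (2 * ψ + π / 2)) (𝓝[>] (-(π / 4))) (𝓝 u) :=
  (Continuous.tendsto' (by fun_prop) _ _ (by ring)).mono_left nhdsWithin_le_nhds

theorem tendsto_cos_mul_sqrt_cos_two_mul (u : ℝ) :
    Tendsto (fun ψ : ℝ => cos ((u + (2 * ψ + π / 2)) * √(cos (2 * ψ))))
      (𝓝[>] (-(π / 4))) (𝓝 1) :=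
  (continuous_cos.tendsto' (u * 0) 1 (by simp)).comp <|
    (tendsto_add_two_mul_add_pi_div_two u).mul <|
      tendsto_nhds_of_tendsto_nhdsWithin tendsto_sqrt_cos_two_mul_nhdsGT

theorem tendsto_cosh_mul_sqrt_cos_two_mul (v : ℝ) :
    Tendsto (fun ψ : ℝ => cosh (v * √(cos (2 * ψ)))) (𝓝[>] (-(π / 4))) (𝓝 1) :=
  (continuous_cosh.tendsto' (v * 0) 1 (by simp)).comp <|
    (tendsto_nhds_of_tendsto_nhdsWithin tendsto_sqrt_cos_two_mul_nhdsGT).const_mul v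

theorem tendsto_XP_fst (u v : ℝ) :
    Tendsto (fun ψ => (XP ψ u v).1) (𝓝[>] (-(π / 4))) (𝓝 (√2 * u)) := by
  have hquot := tendsto_sin_mul_div (tendsto_add_two_mul_add_pi_div_two u)
    tendsto_sqrt_cos_two_mul_nhdsNE
  have hlim := (tendsto_cos_nhdsGT_neg_pi_div_four.const_mul u).sub
    ((tendsto_sin_nhdsGT_neg_pi_div_four.mul hquot).mul (tendsto_cosh_mul_sqrt_cos_two_mul v))
  rw [show √2 * u = u * (√2 / 2) - -(√2 / 2) * u * 1 by ring]
  refine hlim.congr' ?_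
  filter_upwards [tendsto_sqrt_cos_two_mul_nhdsNE.eventually_mem self_mem_nhdsWithin] with ψ hψ
  simp only [XP, sub_div, mul_div_cancel_right₀ _ hψ]
  ring

theorem tendsto_XP_snd_fst (u v : ℝ) :
    Tendsto (fun ψ => (XP ψ u v).2.1) (𝓝[>] (-(π / 4))) (𝓝 (-(√2 * v))) := by
  have hquot := tendsto_sinh_mul_div (tendsto_const_nhds (x := v)) tendsto_sqrt_cos_two_mul_nhdsNE
  have hlim := (tendsto_sin_nhdsGT_neg_pi_div_four.const_mul v).sub
    ((tendsto_cos_nhdsGT_neg_pi_div_four.mul (tendsto_cos_mul_sqrt_cos_two_mul u)).mul hquot)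
  rw [show -(√2 * v) = v * -(√2 / 2) - √2 / 2 * 1 * v by ring]
  refine hlim.congr' ?_
  filter_upwards [tendsto_sqrt_cos_two_mul_nhdsNE.eventually_mem self_mem_nhdsWithin] with ψ hψ
  simp only [XP, sub_div, mul_div_cancel_right₀ _ hψ]
  ring

theorem tendsto_XP_snd_snd (u v : ℝ) :
    Tendsto (fun ψ => (XP ψ u v).2.2) (𝓝[>] (-(π / 4))) (𝓝 1) := by
  simpa only [XP, mul_one] using
    (tendsto_cos_mul_sqrt_cos_two_mul u).mul (tendsto_cosh_mul_sqrt_cos_two_mul v)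

/-- At every fixed (u,v), X_P^ψ(u,v) converges as ψ → (−π/4)⁺ to
(√2·u, −√2·v, 1), a parametrization of the spacelike plane {x₀ = 1}. -/
theorem XP_tendsto_plane (u v : ℝ) :
    Tendsto (fun ψ : ℝ => XP ψ u v) (𝓝[>] (-(π / 4)))
      (𝓝 (Real.sqrt 2 * u, -(Real.sqrt 2 * v), 1)) :=
  (tendsto_XP_fst u v).prodMk_nhds ((tendsto_XP_snd_fst u v).prodMk_nhds (tendsto_XP_snd_snd u v))
end
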